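/- arXiv:math/0306375 — 4 statements merged into one kernel-verified Lean document; each statement's English description precedes it below -/
import Mathlib

section
/- There exist constants K₃ > K₄ > 0 such that for every u ∈ (0, π], setting x = e^{−u}, V₅(x) = exp(T(−5u)) (the image of the triangle T(−5u) under the complex exponential) and U = 𝔻 \ V₅(x), the set U is open and simply connected with 0 ∈ U, and every biholomorphism f : 𝔻 → U with f(0) = 0 satisfies K₄ ≤ −ln|f′(0)| / a₅(u) ≤ K₃, where a₅(u) denotes the area of T(−5u) in the quotient ℂ/2πiℤ. -/
open Complex Metric Set MeasureTheory

noncomputable section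

/-- The closed right isosceles triangle with right-angle vertex `w`, hypotenuse
on the imaginary axis. -/
def Tri (w : ℂ) : Set ℂ := {z : ℂ | z.re ≤ 0 ∧ |z.im - w.im| ≤ z.re - w.re}

/-- Area of a subset of `ℂ` measured in the quotient `ℂ / 2πiℤ`. -/
def quotArea (S : Set ℂ) : ENNReal :=
  MeasureTheory.volume
    ((⋃ k : ℤ, (fun z : ℂ => z + 2 * Real.pi * Complex.I * k) '' S) ∩
      {z : ℂ | 0 ≤ z.im ∧ z.im < 2 * Real.pi})

/-! In the half-plane coordinate `(z - 1) / (z + 1)`, which agrees with `log z / 2` to first order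
at `1`, removing `exp (T(-5u))` from the disc removes from the left half-plane a set lying between
two half-discs about `0` of radius comparable to `u`, at least for small `u`. The explicit rational
maps `z ↦ z - ρ² / z` and `z ↦ z + r² / (z - 2r)`, fed into the Schwarz lemma, then show that such
a cut lowers the conformal radius by a factor `1 - Θ(u²)`; and `u²` is also the order of the area
of the triangle in the cylinder. When `u` is not small, the inner half-disc still exists, and the
disc of radius `e^{-5u}` inside `U` replaces the outer one. -/

open Filter Topology

section HolomorphicInverse

variable {f g : ℂ → ℂ} {U : Set ℂ} {z : ℂ}

lemma not_eventually_eq_of_injOn (hU : IsOpen U) (hinj : InjOn f U) (hz : z ∈ U) :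
    ¬ ∀ᶠ y in 𝓝 z, f y = f z := by
  intro hconst
  obtain ⟨y, ⟨hfy, hyU⟩, hyz⟩ :=
    (((hconst.and (hU.mem_nhds hz)).filter_mono nhdsWithin_le_nhds).and
      (self_mem_nhdsWithin (s := {z}ᶜ))).exists
  exact hyz (hinj hyU hz hfy)

lemma map_nhds_eq_of_injOn (hU : IsOpen U) (hf : DifferentiableOn ℂ f U) (hinj : InjOn f U)
    (hz : z ∈ U) : map f (𝓝 z) = 𝓝 (f z) :=
  have hfz : AnalyticAt ℂ f z := hf.analyticAt (hU.mem_nhds hz)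
  le_antisymm hfz.continuousAt
    (hfz.eventually_constant_or_nhds_le_map_nhds.resolve_left
      (not_eventually_eq_of_injOn hU hinj hz))

lemma image_mem_nhds_of_injOn (hU : IsOpen U) (hf : DifferentiableOn ℂ f U) (hinj : InjOn f U)
    (hz : z ∈ U) : f '' U ∈ 𝓝 (f z) :=
  map_nhds_eq_of_injOn hU hf hinj hz ▸ image_mem_map (hU.mem_nhds hz)

lemma eventually_deriv_ne_zero_of_injOn (hU : IsOpen U) (hf : DifferentiableOn ℂ f U)
    (hinj : InjOn f U) (hz : z ∈ U) : ∀ᶠ y in 𝓝[≠] z, deriv f y ≠ 0 := by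
  have hf' : AnalyticAt ℂ (deriv f) z := (hf.analyticAt (hU.mem_nhds hz)).deriv
  refine hf'.eventually_eq_zero_or_eventually_ne_zero.resolve_left fun hderiv =>
    not_eventually_eq_of_injOn hU hinj hz ?_
  obtain ⟨r, hr, hball⟩ := Metric.mem_nhds_iff.1 (inter_mem hderiv (hU.mem_nhds hz))
  filter_upwards [ball_mem_nhds z hr] with y hy
  exact isOpen_ball.is_const_of_deriv_eq_zero (convex_ball z r).isPreconnected
    (hf.mono fun x hx => (hball hx).2) (fun x hx => (hball hx).1) hy (mem_ball_self hr)

lemma continuousAt_of_leftInvOn (hU : IsOpen U) (hf : DifferentiableOn ℂ f U)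
    (hgf : LeftInvOn g f U) (hz : z ∈ U) : ContinuousAt g (f z) := by
  rw [ContinuousAt, hgf hz, ← map_nhds_eq_of_injOn hU hf hgf.injOn hz, tendsto_map'_iff]
  exact tendsto_id.congr' (eventually_of_mem (hU.mem_nhds hz) fun y hy => (hgf hy).symm)

lemma eventually_apply_eq_of_leftInvOn (hU : IsOpen U) (hf : DifferentiableOn ℂ f U)
    (hgf : LeftInvOn g f U) (hz : z ∈ U) : ∀ᶠ w in 𝓝 (f z), f (g w) = w :=
  eventually_of_mem (image_mem_nhds_of_injOn hU hf hgf.injOn hz) hgf.rightInvOn_image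

lemma tendsto_nhdsNE_of_leftInvOn (hU : IsOpen U) (hf : DifferentiableOn ℂ f U)
    (hgf : LeftInvOn g f U) (hz : z ∈ U) : Tendsto g (𝓝[≠] f z) (𝓝[≠] z) := by
  have hcont : Tendsto g (𝓝 (f z)) (𝓝 z) := by
    simpa only [ContinuousAt, hgf hz] using continuousAt_of_leftInvOn hU hf hgf hz
  refine tendsto_nhdsWithin_iff.2 ⟨hcont.mono_left nhdsWithin_le_nhds, ?_⟩
  filter_upwards [self_mem_nhdsWithin,
    (eventually_apply_eq_of_leftInvOn hU hf hgf hz).filter_mono nhdsWithin_le_nhds] with w hne hw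
  rintro rfl
  exact hne hw.symm

/- The critical points of `f` are isolated, so `g` is continuous and differentiable off an isolated
set; its singularities are therefore removable. -/
lemma differentiableOn_of_leftInvOn (hU : IsOpen U) (hf : DifferentiableOn ℂ f U)
    (hgf : LeftInvOn g f U) : DifferentiableOn ℂ g (f '' U) := by
  have diff_of_deriv_ne {y : ℂ} (hy : y ∈ U) (hfy : deriv f y ≠ 0) :
      DifferentiableAt ℂ g (f y) := by
    have hderiv : HasDerivAt f (deriv f y) (g (f y)) := by
      rw [hgf hy]
      exact (hf.differentiableAt (hU.mem_nhds hy)).hasDerivAt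
    exact (hderiv.of_local_left_inverse (continuousAt_of_leftInvOn hU hf hgf hy) hfy
      (eventually_apply_eq_of_leftInvOn hU hf hgf hy)).differentiableAt
  rintro _ ⟨z, hz, rfl⟩
  refine (analyticAt_of_differentiable_on_punctured_nhds_of_continuousAt ?_
    (continuousAt_of_leftInvOn hU hf hgf hz)).differentiableAt.differentiableWithinAt
  filter_upwards [(tendsto_nhdsNE_of_leftInvOn hU hf hgf hz).eventually
      (eventually_deriv_ne_zero_of_injOn hU hf hgf.injOn hz),
    mem_nhdsWithin_of_mem_nhds (image_mem_nhds_of_injOn hU hf hgf.injOn hz)]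
  rintro _ hne ⟨y, hy, rfl⟩
  rw [hgf hy] at hne
  exact diff_of_deriv_ne hy hne

lemma deriv_mul_deriv_of_leftInvOn (hU : IsOpen U) (hf : DifferentiableOn ℂ f U)
    (hgf : LeftInvOn g f U) (hz : z ∈ U) : deriv g (f z) * deriv f z = 1 := by
  have hg : DifferentiableAt ℂ g (f z) :=
    (differentiableOn_of_leftInvOn hU hf hgf).differentiableAt
      (image_mem_nhds_of_injOn hU hf hgf.injOn hz)
  rw [← deriv_comp z hg (hf.differentiableAt (hU.mem_nhds hz)),
    EventuallyEq.deriv_eq (eventually_of_mem (hU.mem_nhds hz) hgf : g ∘ f =ᶠ[𝓝 z] id), deriv_id]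

end HolomorphicInverse

section Subordination

variable {f g φ : ℂ → ℂ} {U : Set ℂ} {d : ℂ}

lemma norm_mul_norm_deriv_le_one_of_mapsTo_ball (hf : DifferentiableOn ℂ f (ball 0 1))
    (hfU : MapsTo f (ball 0 1) U) (hg : DifferentiableOn ℂ g U) (hgU : MapsTo g U (ball 0 1))
    (hg0 : g (f 0) = 0) (hd : HasDerivAt g d (f 0)) : ‖d‖ * ‖deriv f 0‖ ≤ 1 := by
  have hf' : HasDerivAt f (deriv f 0) 0 :=
    (hf.differentiableAt (ball_mem_nhds 0 one_pos)).hasDerivAt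
  have hmaps : MapsTo (g ∘ f) (ball 0 1) (closedBall ((g ∘ f) 0) 1) := by
    rw [Function.comp_apply, hg0]
    exact (hgU.comp hfU).mono_right ball_subset_closedBall
  simpa only [(hd.comp 0 hf').deriv, norm_mul] using
    norm_deriv_le_one_of_mapsTo_ball (hg.comp hf hfU) hmaps one_pos

lemma norm_deriv_le_norm_deriv_of_bijOn (hf : DifferentiableOn ℂ f (ball 0 1))
    (hfU : BijOn f (ball 0 1) U) (hφ : DifferentiableOn ℂ φ (ball 0 1))
    (hφU : MapsTo φ (ball 0 1) U) (hφf : φ 0 = f 0) : ‖deriv φ 0‖ ≤ ‖deriv f 0‖ := by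
  have h0 : (0 : ℂ) ∈ ball (0 : ℂ) 1 := mem_ball_self one_pos
  set g : ℂ → ℂ := Function.invFunOn f (ball 0 1)
  have hgf : LeftInvOn g f (ball 0 1) := hfU.injOn.leftInvOn_invFunOn
  have hg : DifferentiableOn ℂ g U :=
    hfU.image_eq ▸ differentiableOn_of_leftInvOn isOpen_ball hf hgf
  have hU : U ∈ 𝓝 (f 0) := hfU.image_eq ▸ image_mem_nhds_of_injOn isOpen_ball hf hfU.injOn h0
  have hschwarz : ‖deriv g (f 0)‖ * ‖deriv φ 0‖ ≤ 1 :=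
    norm_mul_norm_deriv_le_one_of_mapsTo_ball hφ hφU hg hfU.surjOn.mapsTo_invFunOn
      (by rw [hφf, hgf h0]) (by rw [hφf]; exact (hg.differentiableAt hU).hasDerivAt)
  have hinv : ‖deriv g (f 0)‖ * ‖deriv f 0‖ = 1 := by
    rw [← norm_mul, deriv_mul_deriv_of_leftInvOn isOpen_ball hf hgf h0, norm_one]
  have hpos : 0 < ‖deriv g (f 0)‖ := by
    by_contra! h
    nlinarith [norm_nonneg (deriv f 0), norm_nonneg (deriv g (f 0))]
  exact le_of_mul_le_mul_left (hschwarz.trans_eq hinv.symm) hpos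

end Subordination

section Cayley

/-- The Cayley transform, mapping the unit disc onto the left half-plane with `0 ↦ -1`. -/
def cayley (z : ℂ) : ℂ := (z - 1) / (z + 1)

/-- The inverse of `cayley`, mapping the left half-plane onto the unit disc with `-1 ↦ 0`. -/
def cayleyInv (w : ℂ) : ℂ := (1 + w) / (1 - w)

variable {z w : ℂ}

lemma cayley_zero : cayley 0 = -1 := by simp [cayley]

lemma cayleyInv_neg_one : cayleyInv (-1) = 0 := by simp [cayleyInv]

lemma add_one_ne_zero_of_norm_lt_one (hz : ‖z‖ < 1) : z + 1 ≠ 0 := fun h => by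
  simp [eq_neg_of_add_eq_zero_left h] at hz

lemma one_sub_ne_zero_of_re_neg (hw : w.re < 0) : 1 - w ≠ 0 := fun h => by
  simp only [← sub_eq_zero.1 h, one_re] at hw
  linarith

lemma re_cayley (z : ℂ) : (cayley z).re = (‖z‖ ^ 2 - 1) / ‖z + 1‖ ^ 2 := by
  simp only [cayley, div_re, ← normSq_eq_norm_sq, normSq_apply, add_re, sub_re, one_re, add_im,
    sub_im, one_im]
  ring

lemma re_cayley_neg (hz : ‖z‖ < 1) : (cayley z).re < 0 := by
  have hz1 : 0 < ‖z + 1‖ := norm_pos_iff.2 (add_one_ne_zero_of_norm_lt_one hz)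
  rw [re_cayley]
  exact div_neg_of_neg_of_pos (by nlinarith [norm_nonneg z]) (by positivity)

lemma norm_cayleyInv_lt_one (hw : w.re < 0) : ‖cayleyInv w‖ < 1 := by
  rw [cayleyInv, norm_div, div_lt_one (norm_pos_iff.2 (one_sub_ne_zero_of_re_neg hw)),
    ← sq_lt_sq₀ (norm_nonneg _) (norm_nonneg _), ← normSq_eq_norm_sq, ← normSq_eq_norm_sq]
  simp only [normSq_apply, add_re, sub_re, one_re, add_im, sub_im, one_im]
  nlinarith

lemma cayley_cayleyInv (hw : w.re < 0) : cayley (cayleyInv w) = w := by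
  have h1 : 1 - w ≠ 0 := one_sub_ne_zero_of_re_neg hw
  rw [cayley, div_eq_iff (add_one_ne_zero_of_norm_lt_one (norm_cayleyInv_lt_one hw)), cayleyInv]
  field_simp
  ring

lemma cayleyInv_cayley (hz : ‖z‖ < 1) : cayleyInv (cayley z) = z := by
  have h1 : z + 1 ≠ 0 := add_one_ne_zero_of_norm_lt_one hz
  rw [cayleyInv, div_eq_iff (one_sub_ne_zero_of_re_neg (re_cayley_neg hz)), cayley]
  field_simp
  ring

lemma hasDerivAt_cayley (hz : z + 1 ≠ 0) : HasDerivAt cayley (2 / (z + 1) ^ 2) z := by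
  refine (((hasDerivAt_id z).sub_const 1).div ((hasDerivAt_id z).add_const 1) hz).congr_deriv ?_
  simp only [id]
  ring

lemma hasDerivAt_cayleyInv (hw : 1 - w ≠ 0) : HasDerivAt cayleyInv (2 / (1 - w) ^ 2) w := by
  refine (((hasDerivAt_id w).const_add 1).div ((hasDerivAt_id w).const_sub 1) hw).congr_deriv ?_
  simp only [id]
  ring

/-- The self-map of the disc which is `w ↦ ψ w / l` in the half-plane coordinate `w = cayley z`;
the scaling by `l` makes it fix `0` when `ψ (-1) = -l`. -/
def cayleyConj (l : ℝ) (ψ : ℂ → ℂ) (z : ℂ) : ℂ := cayleyInv (ψ (cayley z) / l)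

variable {l : ℝ} {ψ : ℂ → ℂ} {d : ℂ} {W S : Set ℂ}

lemma apply_neg_one_div_eq (hl : l ≠ 0) (hψ : ψ (-1) = -l) : ψ (-1) / l = -1 := by
  rw [hψ, neg_div, div_self (ofReal_ne_zero.2 hl)]

lemma cayleyConj_zero (hl : l ≠ 0) (hψ : ψ (-1) = -l) : cayleyConj l ψ 0 = 0 := by
  rw [cayleyConj, cayley_zero, apply_neg_one_div_eq hl hψ, cayleyInv_neg_one]

lemma hasDerivAt_cayleyConj (hl : l ≠ 0) (hψ : ψ (-1) = -l) (hd : HasDerivAt ψ d (-1)) :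
    HasDerivAt (cayleyConj l ψ) (d / l) 0 := by
  have houter : HasDerivAt cayleyInv (2 / (1 - -1) ^ 2) (ψ (cayley 0) / l) := by
    rw [cayley_zero, apply_neg_one_div_eq hl hψ]
    exact hasDerivAt_cayleyInv (by norm_num)
  have hinner : HasDerivAt (fun z => ψ (cayley z)) (d * (2 / (0 + 1) ^ 2)) 0 :=
    HasDerivAt.comp 0 (h₂ := ψ) (cayley_zero ▸ hd) (hasDerivAt_cayley (by norm_num))
  exact (houter.comp 0 (hinner.div_const (l : ℂ))).congr_deriv (by ring)

lemma re_div_ofReal_neg (hl : 0 < l) (hw : w.re < 0) : (w / l).re < 0 := by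
  rw [div_ofReal_re]
  exact div_neg_of_neg_of_pos hw hl

lemma differentiableOn_cayleyConj (hl : 0 < l) (hψ : DifferentiableOn ℂ ψ S)
    (hψre : ∀ w ∈ S, (ψ w).re < 0) (hW : W ⊆ ball 0 1) (hWS : MapsTo cayley W S) :
    DifferentiableOn ℂ (cayleyConj l ψ) W := by
  have hcayley : DifferentiableOn ℂ cayley W := fun z hz =>
    (hasDerivAt_cayley (add_one_ne_zero_of_norm_lt_one
      (mem_ball_zero_iff.1 (hW hz)))).differentiableAt.differentiableWithinAt
  intro z hz
  exact (hasDerivAt_cayleyInv (one_sub_ne_zero_of_re_neg (re_div_ofReal_neg hl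
    (hψre _ (hWS hz))))).differentiableAt.comp_differentiableWithinAt z
      (((hψ.comp hcayley hWS) z hz).div_const (l : ℂ))

lemma cayleyConj_mem_ball (hl : 0 < l) (hψ : (ψ (cayley z)).re < 0) :
    cayleyConj l ψ z ∈ ball (0 : ℂ) 1 :=
  mem_ball_zero_iff.2 (norm_cayleyInv_lt_one (re_div_ofReal_neg hl hψ))

lemma cayley_cayleyConj (hl : 0 < l) (hψ : (ψ (cayley z)).re < 0) :
    cayley (cayleyConj l ψ z) = ψ (cayley z) / l :=
  cayley_cayleyInv (re_div_ofReal_neg hl hψ)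

end Cayley

section SimplePole

/-- The rational map `z ↦ z + c / (z - a)`. For `a = 0` and `c = -ρ ^ 2` it opens up the half-disc
of radius `ρ` cut out of the left half-plane; for `a = 2 * r` and `c = r ^ 2` it has a double zero
at `r` and maps the left half-plane into itself, away from a half-disc about `0`. -/
def simplePoleMap (c a : ℝ) (z : ℂ) : ℂ := z + c / (z - a)

variable {a c r ρ : ℝ} {z : ℂ}

lemma hasDerivAt_simplePoleMap (hz : z - a ≠ 0) :
    HasDerivAt (simplePoleMap c a) (1 - c / (z - a) ^ 2) z := by
  refine ((hasDerivAt_id z).add ((hasDerivAt_const z (c : ℂ)).div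
    ((hasDerivAt_id z).sub_const (a : ℂ)) hz)).congr_deriv ?_
  simp only [id]
  ring

lemma simplePoleMap_neg_one : simplePoleMap c a (-1) = -(1 + c / (1 + a) : ℝ) := by
  have h : (-1 : ℂ) - a = -(1 + a) := by ring
  simp only [simplePoleMap, h, div_neg]
  push_cast
  ring

lemma re_simplePoleMap (c a : ℝ) (z : ℂ) :
    (simplePoleMap c a z).re = z.re + c * (z.re - a) / ‖z - a‖ ^ 2 := by
  rw [simplePoleMap, add_re, div_re, ← normSq_eq_norm_sq]
  simp

lemma re_simplePoleMap_neg_of_nonneg (hc : 0 ≤ c) (ha : 0 ≤ a) (hz : z.re < 0) :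
    (simplePoleMap c a z).re < 0 := by
  have : c * (z.re - a) / ‖z - a‖ ^ 2 ≤ 0 :=
    div_nonpos_of_nonpos_of_nonneg (mul_nonpos_of_nonneg_of_nonpos hc (by linarith)) (by positivity)
  rw [re_simplePoleMap]
  linarith

lemma re_simplePoleMap_neg_of_lt_norm (hρ : 0 ≤ ρ) (hz : z.re < 0) (hρz : ρ < ‖z‖) :
    (simplePoleMap (-ρ ^ 2) 0 z).re < 0 := by
  have hnorm : 0 < ‖z‖ := hρ.trans_lt hρz
  have hre : (simplePoleMap (-ρ ^ 2) 0 z).re = z.re * (1 - ρ ^ 2 / ‖z‖ ^ 2) := by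
    rw [re_simplePoleMap, ofReal_zero, sub_zero, sub_zero]
    ring
  rw [hre]
  exact mul_neg_of_neg_of_pos hz (sub_pos.2 ((div_lt_one (by positivity)).2 (by gcongr)))

lemma sub_ofReal_ne_zero_of_re_neg (ha : 0 ≤ a) (hz : z.re < 0) : z - a ≠ 0 := fun h => by
  rw [sub_eq_zero.1 h, ofReal_re] at hz
  linarith

lemma half_le_norm_simplePoleMap (hr : 0 ≤ r) (hz : z.re < 0) :
    r / 2 ≤ ‖simplePoleMap (r ^ 2) (2 * r) z‖ := by
  have hpole : z - (2 * r : ℝ) ≠ 0 := sub_ofReal_ne_zero_of_re_neg (by positivity) hz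
  have hsquare : simplePoleMap (r ^ 2) (2 * r) z = (z - r) ^ 2 / (z - (2 * r : ℝ)) := by
    rw [simplePoleMap, eq_div_iff hpole, add_mul, div_mul_cancel₀ _ hpole]
    push_cast
    ring
  have hr_le : r ≤ ‖z - r‖ := by
    have := (neg_le_abs _).trans (abs_re_le_norm (z - r))
    rw [sub_re, ofReal_re] at this
    linarith
  have hpole_le : ‖z - (2 * r : ℝ)‖ ≤ 2 * ‖z - r‖ := calc
    ‖z - (2 * r : ℝ)‖ = ‖(z - r) - r‖ := by push_cast; ring_nf
    _ ≤ ‖z - r‖ + ‖(r : ℂ)‖ := norm_sub_le _ _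
    _ ≤ 2 * ‖z - r‖ := by rw [norm_real, Real.norm_of_nonneg hr]; linarith
  rw [hsquare, norm_div, norm_pow, le_div_iff₀ (norm_pos_iff.2 hpole)]
  nlinarith

end SimplePole

section DerivativeBounds

variable {f : ℂ → ℂ} {U : Set ℂ} {r ρ : ℝ}

lemma norm_deriv_le_of_lt_norm_cayley (hρ : 0 ≤ ρ) (hU : U ⊆ ball 0 1)
    (hUρ : ∀ z ∈ U, ρ < ‖cayley z‖) (hf : DifferentiableOn ℂ f (ball 0 1))
    (hfU : MapsTo f (ball 0 1) U) (hf0 : f 0 = 0) :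
    ‖deriv f 0‖ ≤ (1 - ρ ^ 2) / (1 + ρ ^ 2) := by
  have h0U : (0 : ℂ) ∈ U := hf0 ▸ hfU (mem_ball_self one_pos)
  have hρ1 : ρ < 1 := by simpa only [cayley_zero, norm_neg, norm_one] using hUρ 0 h0U
  have hl : 0 < 1 - ρ ^ 2 := by nlinarith
  set S : Set ℂ := {w | w.re < 0 ∧ ρ < ‖w‖}
  have hUS : MapsTo cayley U S := fun z hz =>
    ⟨re_cayley_neg (mem_ball_zero_iff.1 (hU hz)), hUρ z hz⟩
  set ψ : ℂ → ℂ := simplePoleMap (-ρ ^ 2) 0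
  have hψS : ∀ w ∈ S, (ψ w).re < 0 := fun w hw => re_simplePoleMap_neg_of_lt_norm hρ hw.1 hw.2
  have hψ : DifferentiableOn ℂ ψ S := fun w hw =>
    (hasDerivAt_simplePoleMap
      (sub_ofReal_ne_zero_of_re_neg le_rfl hw.1)).differentiableAt.differentiableWithinAt
  have hψ1 : ψ (-1) = -(1 - ρ ^ 2 : ℝ) := by
    rw [show ψ (-1) = _ from simplePoleMap_neg_one, add_zero, div_one, ← sub_eq_add_neg]
  have hψ' : HasDerivAt ψ (1 + ρ ^ 2 : ℝ) (-1) := by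
    refine (hasDerivAt_simplePoleMap (by norm_num)).congr_deriv ?_
    norm_num
  have hschwarz := norm_mul_norm_deriv_le_one_of_mapsTo_ball hf hfU
    (differentiableOn_cayleyConj hl hψ hψS hU hUS)
    (fun z hz => cayleyConj_mem_ball hl (hψS _ (hUS hz)))
    (by rw [hf0, cayleyConj_zero hl.ne' hψ1]) (hf0 ▸ hasDerivAt_cayleyConj hl.ne' hψ1 hψ')
  rwa [← ofReal_div, norm_real, Real.norm_of_nonneg (by positivity), div_mul_eq_mul_div,
    div_le_one hl, ← le_div_iff₀' (by positivity)] at hschwarz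

lemma inv_one_add_two_mul_sq_le_div (hr : 0 ≤ r) :
    (1 + 2 * r ^ 2)⁻¹ ≤ (1 - r ^ 2 / (1 + 2 * r) ^ 2) / (1 + r ^ 2 / (1 + 2 * r)) := by
  have hratio : (1 - r ^ 2 / (1 + 2 * r) ^ 2) / (1 + r ^ 2 / (1 + 2 * r)) =
      (1 + 3 * r) / (1 + 3 * r + 2 * r ^ 2) := by
    field_simp
    ring
  rw [hratio, inv_eq_one_div, div_le_div_iff₀ (by positivity) (by positivity)]
  nlinarith [pow_nonneg hr 3]

lemma inv_le_norm_deriv_of_lt_norm_cayley (hr : 0 < r) (hr1 : r ≤ 1)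
    (hU : ∀ z ∈ ball (0 : ℂ) 1, r / 4 < ‖cayley z‖ → z ∈ U)
    (hf : DifferentiableOn ℂ f (ball 0 1)) (hfU : BijOn f (ball 0 1) U) (hf0 : f 0 = 0) :
    (1 + 2 * r ^ 2)⁻¹ ≤ ‖deriv f 0‖ := by
  set ψ : ℂ → ℂ := simplePoleMap (r ^ 2) (2 * r)
  set l : ℝ := 1 + r ^ 2 / (1 + 2 * r)
  have hl : 0 < l := by positivity
  have hl2 : l < 2 := by
    have : r ^ 2 / (1 + 2 * r) < 1 := (div_lt_one (by positivity)).2 (by nlinarith)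
    linarith
  have hψre : ∀ w : ℂ, w.re < 0 → (ψ w).re < 0 := fun w hw =>
    re_simplePoleMap_neg_of_nonneg (by positivity) (by positivity) hw
  have hψ : DifferentiableOn ℂ ψ {w | w.re < 0} := fun w hw =>
    (hasDerivAt_simplePoleMap
      (sub_ofReal_ne_zero_of_re_neg (by positivity) hw)).differentiableAt.differentiableWithinAt
  have hψ1 : ψ (-1) = -(l : ℂ) := simplePoleMap_neg_one
  have hψ' : HasDerivAt ψ (1 - r ^ 2 / (1 + 2 * r) ^ 2 : ℝ) (-1) := by
    refine (hasDerivAt_simplePoleMap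
      (sub_ofReal_ne_zero_of_re_neg (by positivity) (by norm_num))).congr_deriv ?_
    push_cast
    ring
  have hcayley : MapsTo cayley (ball 0 1) {w | w.re < 0} := fun z hz =>
    re_cayley_neg (mem_ball_zero_iff.1 hz)
  have hφU : MapsTo (cayleyConj l ψ) (ball 0 1) U := fun z hz => by
    have hψz : (ψ (cayley z)).re < 0 := hψre _ (hcayley hz)
    refine hU _ (cayleyConj_mem_ball hl hψz) ?_
    rw [cayley_cayleyConj hl hψz, norm_div, norm_real, Real.norm_of_nonneg hl.le, lt_div_iff₀ hl]
    exact (by nlinarith : r / 4 * l < r / 2).trans_le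
      (half_le_norm_simplePoleMap hr.le (hcayley hz))
  have hle := norm_deriv_le_norm_deriv_of_bijOn hf hfU
    (differentiableOn_cayleyConj hl hψ hψre Subset.rfl hcayley) hφU
    (by rw [hf0, cayleyConj_zero hl.ne' hψ1])
  rw [(hasDerivAt_cayleyConj hl.ne' hψ1 hψ').deriv, ← ofReal_div, norm_real] at hle
  exact (inv_one_add_two_mul_sq_le_div hr.le).trans ((Real.le_norm_self _).trans hle)

end DerivativeBounds

section Triangle

variable {w z : ℂ} {x : ℝ}

lemma mem_Tri_ofReal : z ∈ Tri (x : ℂ) ↔ z.re ≤ 0 ∧ |z.im| ≤ z.re - x := by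
  simp only [Tri, mem_ofPred_eq, ofReal_re, ofReal_im, sub_zero]

lemma Tri_subset_reProdIm (w : ℂ) :
    Tri w ⊆ Icc w.re 0 ×ℂ Icc (w.im + w.re) (w.im - w.re) := fun z hz => by
  have him := abs_le.1 hz.2
  refine mem_reProdIm.2 ⟨⟨by linarith, hz.1⟩, ?_, ?_⟩ <;> linarith [hz.1]

lemma isCompact_Tri (w : ℂ) : IsCompact (Tri w) :=
  (isCompact_Icc.reProdIm isCompact_Icc).of_isClosed_subset
    ((isClosed_le continuous_re continuous_const).inter
      (isClosed_le (continuous_im.sub continuous_const).abs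
        (continuous_re.sub continuous_const))) (Tri_subset_reProdIm w)

lemma sub_ofReal_mem_Tri {s : ℝ} (hz : z ∈ Tri w) (hs : s ≤ 0) (hzs : (z - s).re ≤ 0) :
    z - s ∈ Tri w := by
  refine ⟨hzs, ?_⟩
  rw [sub_im, ofReal_im, sub_zero, sub_re, ofReal_re]
  linarith [hz.2]

lemma norm_le_of_mem_Tri_ofReal (hz : z ∈ Tri (x : ℂ)) : ‖z‖ ≤ -x := by
  obtain ⟨hre, him⟩ := mem_Tri_ofReal.1 hz
  calc ‖z‖ ≤ |z.re| + |z.im| := norm_le_abs_re_add_abs_im z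
    _ ≤ -x := by rw [abs_of_nonpos hre]; linarith

lemma mem_Tri_ofReal_of_two_mul_norm_le (hre : z.re ≤ 0) (hz : 2 * ‖z‖ ≤ -x) :
    z ∈ Tri (x : ℂ) :=
  mem_Tri_ofReal.2 ⟨hre, by
    linarith [abs_im_le_norm z, (neg_le_abs z.re).trans (abs_re_le_norm z)]⟩

end Triangle

section Area

lemma volume_Icc_reProdIm_Icc (a b c d : ℝ) :
    volume (Icc a b ×ℂ Icc c d) = ENNReal.ofReal (b - a) * ENNReal.ofReal (d - c) := by
  rw [← Real.volume_Icc, ← Real.volume_Icc, ← Measure.prod_prod, ← Measure.volume_eq_prod]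
  exact volume_preserving_equiv_real_prod.measure_preimage
    (measurableSet_Icc.prod measurableSet_Icc).nullMeasurableSet

lemma volume_Tri_le {w : ℂ} (hw : w.re ≤ 0) :
    volume (Tri w) ≤ ENNReal.ofReal (2 * w.re ^ 2) := by
  refine (measure_mono (Tri_subset_reProdIm w)).trans_eq ?_
  rw [volume_Icc_reProdIm_Icc, ← ENNReal.ofReal_mul (by linarith)]
  ring_nf

lemma quotArea_le_volume (S : Set ℂ) : quotArea S ≤ volume S := by
  set τ : ℤ → ℂ → ℂ := fun k z => z + 2 * Real.pi * I * k
  set F : Set ℂ := {z | 0 ≤ z.im ∧ z.im < 2 * Real.pi}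
  have him (k : ℤ) (z : ℂ) : (τ k z).im = z.im + 2 * Real.pi * k := by simp [τ]
  have hF (k : ℤ) : MeasurableSet (τ k ⁻¹' F) :=
    ((measurableSet_le measurable_const measurable_im).inter
      (measurableSet_lt measurable_im measurable_const)).preimage (by fun_prop)
  have hdisj : Pairwise (Function.onFun Disjoint fun k => τ k ⁻¹' F) := by
    refine fun k l hkl => Set.disjoint_left.2 fun z ⟨hk0, hk⟩ ⟨hl0, hl⟩ => hkl ?_
    rw [him] at hk0 hk hl0 hl
    have hkl_lt : (k : ℝ) < l + 1 := by nlinarith [Real.pi_pos]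
    have hlk_lt : (l : ℝ) < k + 1 := by nlinarith [Real.pi_pos]
    norm_cast at hkl_lt hlk_lt
    omega
  have hpiece (k : ℤ) : volume (τ k '' S ∩ F) = volume.restrict S (τ k ⁻¹' F) := by
    rw [Measure.restrict_apply (hF k), inter_comm (τ k ⁻¹' F), ← image_inter_preimage]
    simp only [τ, image_add_right, measure_preimage_add_right]
  calc quotArea S = volume (⋃ k, τ k '' S ∩ F) := by rw [quotArea, iUnion_inter]
    _ ≤ ∑' k, volume (τ k '' S ∩ F) := measure_iUnion_le _
    _ = volume.restrict S (⋃ k, τ k ⁻¹' F) := by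
        simp only [hpiece, measure_iUnion hdisj hF]
    _ ≤ volume S := (measure_mono (subset_univ _)).trans_eq (Measure.restrict_apply_univ S)

lemma ofReal_sq_le_quotArea_Tri {t x : ℝ} (ht : 0 ≤ t) (ht' : t < 2 * Real.pi)
    (hx : 2 * t ≤ -x) : ENNReal.ofReal (t ^ 2) ≤ quotArea (Tri (x : ℂ)) := by
  have hsquare : volume (Icc (-t) 0 ×ℂ Icc 0 t) = ENNReal.ofReal (t ^ 2) := by
    rw [volume_Icc_reProdIm_Icc, ← ENNReal.ofReal_mul (by linarith)]
    ring_nf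
  rw [← hsquare]
  refine measure_mono fun z hz => ?_
  obtain ⟨⟨hre, hre0⟩, him0, him⟩ := mem_reProdIm.1 hz
  refine ⟨mem_iUnion.2 ⟨0, z, mem_Tri_ofReal.2 ⟨hre0, ?_⟩, by simp⟩, him0, by linarith⟩
  rw [abs_of_nonneg him0]
  linarith

lemma toReal_quotArea_Tri_mem_Icc {t x : ℝ} (ht : 0 ≤ t) (ht' : t < 2 * Real.pi)
    (hx : 2 * t ≤ -x) : (quotArea (Tri (x : ℂ))).toReal ∈ Icc (t ^ 2) (2 * x ^ 2) := by
  have hle : quotArea (Tri (x : ℂ)) ≤ ENNReal.ofReal (2 * x ^ 2) :=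
    (quotArea_le_volume _).trans (volume_Tri_le (by rw [ofReal_re]; linarith))
  exact ⟨(ENNReal.ofReal_le_iff_le_toReal (ne_top_of_le_ne_top ENNReal.ofReal_ne_top hle)).1
    (ofReal_sq_le_quotArea_Tri ht ht' hx), ENNReal.toReal_le_of_le_ofReal (by positivity) hle⟩

end Area

section CutDisc

/-- The domain `𝔻 \ exp (T(w))` whose conformal radius at `0` is estimated. -/
def cutDisc (w : ℂ) : Set ℂ := ball 0 1 \ exp '' Tri w

variable {w z : ℂ}

lemma isOpen_cutDisc (w : ℂ) : IsOpen (cutDisc w) :=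
  isOpen_ball.sdiff ((isCompact_Tri w).image continuous_exp).isClosed

lemma zero_mem_cutDisc (w : ℂ) : (0 : ℂ) ∈ cutDisc w :=
  ⟨mem_ball_self one_pos, fun ⟨z, _, hz⟩ => exp_ne_zero z hz⟩

/- The triangle is stable under translation to the right within the left half-plane, that is, its
image under `exp` is stable under radial expansion within the disc. -/
lemma starConvex_cutDisc (w : ℂ) : StarConvex ℝ 0 (cutDisc w) := by
  refine starConvex_zero_iff.2 fun z ⟨hz, hzT⟩ t ht0 ht1 => ?_
  rcases ht0.eq_or_lt with rfl | ht
  · rw [zero_smul]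
    exact zero_mem_cutDisc w
  rw [mem_ball_zero_iff] at hz
  refine ⟨?_, ?_⟩
  · rw [mem_ball_zero_iff, norm_smul, Real.norm_of_nonneg ht0]
    exact mul_lt_one_of_nonneg_of_lt_one_right ht1 (norm_nonneg z) hz
  rintro ⟨v, hv, hvz⟩
  have hexp : exp (v - Real.log t) = z := by
    rw [exp_sub, hvz, ← ofReal_exp, Real.exp_log ht, real_smul,
      mul_div_cancel_left₀ _ (ofReal_ne_zero.2 ht.ne')]
  refine hzT ⟨_, sub_ofReal_mem_Tri hv (Real.log_nonpos ht0 ht1) ?_, hexp⟩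
  rw [← hexp, norm_exp, Real.exp_lt_one_iff] at hz
  exact hz.le

lemma simplyConnectedSpace_cutDisc (w : ℂ) : SimplyConnectedSpace (cutDisc w) :=
  have := (starConvex_cutDisc w).contractibleSpace ⟨0, zero_mem_cutDisc w⟩
  inferInstance

lemma mem_cutDisc_of_norm_lt_exp {x : ℝ} (hx : x ≤ 0) (hz : ‖z‖ < Real.exp x) :
    z ∈ cutDisc (x : ℂ) := by
  refine ⟨mem_ball_zero_iff.2 (hz.trans_le (Real.exp_le_one_iff.2 hx)), ?_⟩
  rintro ⟨v, hv, rfl⟩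
  rw [norm_exp, Real.exp_lt_exp] at hz
  linarith [abs_nonneg v.im, (mem_Tri_ofReal.1 hv).2]

lemma norm_cayley_exp_le (hw : ‖w‖ ≤ 1 / 2) : ‖cayley (exp w)‖ ≤ 2 * ‖w‖ := by
  have hsub : ‖exp w - 1‖ ≤ 2 * ‖w‖ := norm_exp_sub_one_le (by linarith)
  have hadd : 1 ≤ ‖exp w + 1‖ := by
    have := norm_sub_norm_le (2 : ℂ) (1 - exp w)
    rw [show (2 : ℂ) - (1 - exp w) = exp w + 1 by ring, norm_sub_rev, norm_ofNat] at this
    linarith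
  rw [cayley, norm_div]
  exact (div_le_self (norm_nonneg _) hadd).trans hsub

lemma norm_log_le_four_mul_norm_cayley (hz : ‖z‖ < 1) (hcz : ‖cayley z‖ ≤ 1 / 5) :
    ‖log z‖ ≤ 4 * ‖cayley z‖ := by
  set c : ℂ := cayley z
  have hc : 1 - c ≠ 0 := one_sub_ne_zero_of_re_neg (re_cayley_neg hz)
  have hz_eq : z = 1 + 2 * c / (1 - c) := by
    rw [← cayleyInv_cayley hz, show cayleyInv (cayley z) = (1 + c) / (1 - c) from rfl]
    field_simp
    ring
  have hc_le : 4 / 5 ≤ ‖1 - c‖ := by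
    have := norm_sub_norm_le (1 : ℂ) c
    rw [norm_one] at this
    linarith
  have hnorm : ‖2 * c / (1 - c)‖ ≤ 5 / 2 * ‖c‖ := by
    rw [norm_div, norm_mul, norm_ofNat, div_le_iff₀ (by linarith)]
    nlinarith [norm_nonneg c]
  rw [hz_eq]
  linarith [norm_log_one_add_half_le_self (z := 2 * c / (1 - c)) (by linarith), norm_nonneg c]

lemma lt_norm_cayley_of_mem_cutDisc {x ρ : ℝ} (hρ : ρ ≤ 1 / 5) (hx : 8 * ρ ≤ -x)
    (hz : z ∈ cutDisc (x : ℂ)) : ρ < ‖cayley z‖ := by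
  by_contra! hcz
  have hz1 : ‖z‖ < 1 := mem_ball_zero_iff.1 hz.1
  have hz0 : z ≠ 0 := by
    rintro rfl
    rw [cayley_zero, norm_neg, norm_one] at hcz
    linarith
  have hre : (log z).re ≤ 0 := by
    rw [log_re]
    exact Real.log_nonpos (norm_nonneg z) hz1.le
  refine hz.2 ⟨log z, mem_Tri_ofReal_of_two_mul_norm_le hre ?_, exp_log hz0⟩
  linarith [norm_log_le_four_mul_norm_cayley hz1 (hcz.trans hρ)]

lemma mem_cutDisc_of_lt_norm_cayley {x : ℝ} (hx : -x ≤ 1 / 2) (hz : z ∈ ball (0 : ℂ) 1)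
    (hcz : 2 * -x < ‖cayley z‖) : z ∈ cutDisc (x : ℂ) := by
  refine ⟨hz, ?_⟩
  rintro ⟨v, hv, rfl⟩
  have hv_norm : ‖v‖ ≤ -x := norm_le_of_mem_Tri_ofReal hv
  linarith [norm_cayley_exp_le (hv_norm.trans hx)]

end CutDisc

section LogDerivativeBounds

variable {f : ℂ → ℂ} {x : ℝ}

lemma exp_le_norm_deriv_of_bijOn_cutDisc (hx : x ≤ 0) (hf : DifferentiableOn ℂ f (ball 0 1))
    (hfU : BijOn f (ball 0 1) (cutDisc (x : ℂ))) (hf0 : f 0 = 0) :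
    Real.exp x ≤ ‖deriv f 0‖ := by
  have hscale : HasDerivAt (fun z : ℂ => Real.exp x * z) (Real.exp x : ℝ) 0 := by
    simpa only [id, mul_one] using (hasDerivAt_id (0 : ℂ)).const_mul (Real.exp x : ℂ)
  have hle := norm_deriv_le_norm_deriv_of_bijOn (φ := fun z => Real.exp x * z) hf hfU
    (by fun_prop) (fun z hz => mem_cutDisc_of_norm_lt_exp hx ?_) (by rw [mul_zero, hf0])
  · rwa [hscale.deriv, norm_real, Real.norm_of_nonneg (Real.exp_nonneg x)] at hle
  · rw [norm_mul, norm_real, Real.norm_of_nonneg (Real.exp_nonneg x)]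
    exact mul_lt_of_lt_one_right (Real.exp_pos x) (mem_ball_zero_iff.1 hz)

lemma sq_le_neg_log_norm_deriv_of_bijOn_cutDisc (hx : x ≤ 0) (hx' : -16 ≤ x)
    (hf : DifferentiableOn ℂ f (ball 0 1)) (hfU : BijOn f (ball 0 1) (cutDisc (x : ℂ)))
    (hf0 : f 0 = 0) : (x / 80) ^ 2 ≤ -Real.log ‖deriv f 0‖ := by
  have hpos : 0 < ‖deriv f 0‖ :=
    (Real.exp_pos x).trans_le (exp_le_norm_deriv_of_bijOn_cutDisc hx hf hfU hf0)
  have hle := norm_deriv_le_of_lt_norm_cayley (ρ := -x / 80) (by linarith) sdiff_subset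
    (fun z hz => lt_norm_cayley_of_mem_cutDisc (by linarith) (by linarith) hz) hf hfU.mapsTo hf0
  have hquot : (1 - (-x / 80) ^ 2) / (1 + (-x / 80) ^ 2) ≤ 1 - (x / 80) ^ 2 := by
    rw [neg_div, neg_sq]
    exact div_le_self (by nlinarith) (by nlinarith)
  linarith [Real.log_le_sub_one_of_pos hpos]

lemma neg_log_norm_deriv_le_of_bijOn_cutDisc (hx : x < 0)
    (hf : DifferentiableOn ℂ f (ball 0 1)) (hfU : BijOn f (ball 0 1) (cutDisc (x : ℂ)))
    (hf0 : f 0 = 0) : -Real.log ‖deriv f 0‖ ≤ 128 * x ^ 2 := by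
  rcases le_total (-x) (1 / 8) with hsmall | hlarge
  · have hle := inv_le_norm_deriv_of_lt_norm_cayley (r := -8 * x) (by linarith) (by linarith)
      (fun z hz hcz => mem_cutDisc_of_lt_norm_cayley (by linarith) hz (by linarith)) hf hfU hf0
    have hlog := Real.log_le_log (by positivity) hle
    rw [Real.log_inv] at hlog
    have hlog1 : Real.log (1 + 2 * (-8 * x) ^ 2) ≤ 1 + 2 * (-8 * x) ^ 2 - 1 :=
      Real.log_le_sub_one_of_pos (by positivity)
    linarith
  · have hlog := Real.log_le_log (Real.exp_pos x)
      (exp_le_norm_deriv_of_bijOn_cutDisc hx.le hf hfU hf0)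
    rw [Real.log_exp] at hlog
    nlinarith

end LogDerivativeBounds

/-- There are constants `K₃ > K₄ > 0` such that for every `u ∈ (0, π]`, with
`V₅(x) = exp(T(-5u))` and `U = 𝔻 \ V₅(x)`, the set `U` is open, simply
connected, contains `0`, and every biholomorphism `f : 𝔻 → U` with `f 0 = 0`
satisfies `K₄ ≤ -ln|f'(0)| / a₅(u) ≤ K₃`, where `a₅(u)` is the area of
`T(-5u)` in the quotient `ℂ/2πiℤ`. -/
theorem stmt10 : ∃ K₃ K₄ : ℝ, K₄ > 0 ∧ K₃ > K₄ ∧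
    ∀ u : ℝ, 0 < u → u ≤ Real.pi →
    IsOpen (Metric.ball (0 : ℂ) 1 \ Complex.exp '' Tri ((-5 * u : ℝ) : ℂ)) ∧
    SimplyConnectedSpace
      ↥(Metric.ball (0 : ℂ) 1 \ Complex.exp '' Tri ((-5 * u : ℝ) : ℂ)) ∧
    (0 : ℂ) ∈ Metric.ball (0 : ℂ) 1 \ Complex.exp '' Tri ((-5 * u : ℝ) : ℂ) ∧
    ∀ f : ℂ → ℂ, DifferentiableOn ℂ f (Metric.ball 0 1) →
      Set.BijOn f (Metric.ball 0 1)
        (Metric.ball (0 : ℂ) 1 \ Complex.exp '' Tri ((-5 * u : ℝ) : ℂ)) →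
      f 0 = 0 →
      K₄ ≤ -Real.log (‖deriv f 0‖) /
            (quotArea (Tri ((-5 * u : ℝ) : ℂ))).toReal ∧
      -Real.log (‖deriv f 0‖) /
            (quotArea (Tri ((-5 * u : ℝ) : ℂ))).toReal ≤ K₃ := by
  refine ⟨3200, 1 / 12800, by norm_num, by norm_num, fun u hu hπ => ⟨isOpen_cutDisc _,
    simplyConnectedSpace_cutDisc _, zero_mem_cutDisc _, fun f hf hfU hf0 => ?_⟩⟩
  obtain ⟨harea_ge, harea_le⟩ :=
    toReal_quotArea_Tri_mem_Icc (t := u) (x := -5 * u) hu.le (by linarith) (by linarith)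
  have hlog_ge := sq_le_neg_log_norm_deriv_of_bijOn_cutDisc (x := -5 * u) (by linarith)
    (by linarith [Real.pi_lt_d2]) hf hfU hf0
  have hlog_le := neg_log_norm_deriv_le_of_bijOn_cutDisc (x := -5 * u) (by linarith) hf hfU hf0
  have harea : 0 < (quotArea (Tri ((-5 * u : ℝ) : ℂ))).toReal := (pow_pos hu 2).trans_le harea_ge
  rw [le_div_iff₀ harea, div_le_iff₀ harea]
  constructor <;> linarith
end
end

section
/- For u > 0 let C(u) ⊆ ℂ denote the closed solid triangle with vertices −u, iπ and −iπ. Then for every M > 0 there exists u₀ > 0 such that for every u ∈ (0, u₀) and every C¹ path γ : [0,1] → 𝔻 \ {0} admitting a continuous lift w : [0,1] → ℂ with exp(w(t)) = γ(t) for all t, w(0) ∈ C(u) and w(1) ∈ C(u) + 2πi, the hyperbolic length of γ is at least M. (In other words, the infimum l(u) of hyperbolic lengths of such paths tends to +∞ as u → 0.) -/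
open Complex Metric Set

noncomputable section

/-- Hyperbolic length of a `C¹` path `γ : [0,1] → 𝔻`. -/
def hypLength (γ : ℝ → ℂ) : ℝ :=
  ∫ t in (0:ℝ)..1, 2 * ‖deriv γ t‖ / (1 - ‖γ t‖ ^ 2)

/-- The closed solid triangle (cone) with vertices `-u`, `iπ`, `-iπ`. -/
def Cone (u : ℝ) : Set ℂ :=
  convexHull ℝ {(-u : ℂ), (Real.pi : ℂ) * Complex.I, -((Real.pi : ℂ) * Complex.I)}

/-!
Lifting through `exp`, the path starts at `w 0` in the cone and must cross the line `Im = π`, so `γ`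
joins `z = exp (w 0)` to a point `p` of the negative real axis and is at least as long as
`d_𝔻(z, p)`. That distance is at least `log (1 + |z - p| / (1 - |z|))`. The cone makes the ratio
large: with `θ = 1 - |Im (w 0)| / π` the slope of its sides gives `1 - |z| ≤ u θ`, whereas the
distance from `z` to the negative real axis is at least `|z| θ`. Hence `γ` has length at least
`log (1 / u)`.
-/

open MeasureTheory intervalIntegral
open scoped ComplexConjugate

lemma hasDerivAt_artanh {x : ℝ} (hx : x ∈ Ioo (-1) 1) :
    HasDerivAt Real.artanh (1 / (1 - x ^ 2)) x := by
  have hneg : 1 - x ≠ 0 := by linarith [hx.2]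
  have hpos : 1 + x ≠ 0 := by linarith [hx.1]
  have hsq : 1 - x ^ 2 ≠ 0 := by
    rw [show 1 - x ^ 2 = (1 - x) * (1 + x) by ring]
    exact mul_ne_zero hneg hpos
  have hquot : HasDerivAt (fun x : ℝ => (1 + x) / (1 - x)) (2 / (1 - x) ^ 2) x := by
    refine (((hasDerivAt_id x).const_add 1).div ((hasDerivAt_id x).const_sub 1) hneg).congr_deriv ?_
    simp only [id]
    ring
  have hlog := (hquot.log (div_ne_zero hpos hneg)).const_mul (1 / 2)
  have heq : Real.artanh =ᶠ[nhds x] fun x => 1 / 2 * Real.log ((1 + x) / (1 - x)) := by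
    filter_upwards [Ioo_mem_nhds hx.1 hx.2] with y hy
    exact Real.artanh_eq_half_log (Ioo_subset_Icc_self hy)
  refine (hlog.congr_of_eventuallyEq heq).congr_deriv ?_
  field_simp
  ring

lemma continuousOn_artanh : ContinuousOn Real.artanh (Ioo (-1) 1) := fun _ hx =>
  (hasDerivAt_artanh hx).continuousAt.continuousWithinAt

lemma one_sub_sq_norm_pos {E : Type*} [SeminormedAddGroup E] {x : E} (hx : ‖x‖ < 1) :
    0 < 1 - ‖x‖ ^ 2 :=
  sub_pos.2 (pow_lt_one₀ (norm_nonneg x) hx two_ne_zero)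

section Mobius

/-- The automorphism `z ↦ (z - a) / (1 - conj a * z)` of the unit disc, taking `a` to `0`. It is
used to move the starting point of a path to the centre. -/
def mobius (a z : ℂ) : ℂ := (z - a) / (1 - conj a * z)

/-- The hyperbolic distance of the unit disc, on all of `ℂ`; it is meaningful for points of the open
disc only. -/
def hypDist (z w : ℂ) : ℝ := 2 * Real.artanh (‖z - w‖ / ‖1 - conj z * w‖)

variable {a z w : ℂ}

@[simp]
lemma mobius_self (a : ℂ) : mobius a a = 0 := by simp [mobius]

lemma hypDist_eq_artanh_norm_mobius (z w : ℂ) : hypDist z w = 2 * Real.artanh ‖mobius z w‖ := by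
  rw [hypDist, mobius, norm_div, norm_sub_rev]

lemma one_sub_conj_mul_ne_zero (ha : ‖a‖ < 1) (hz : ‖z‖ ≤ 1) : 1 - conj a * z ≠ 0 := by
  refine sub_ne_zero.2 fun h => ?_
  have : ‖a‖ * ‖z‖ = 1 := by rw [← norm_conj a, ← norm_mul, ← h, norm_one]
  nlinarith [norm_nonneg a]

lemma sq_norm_one_sub_conj_mul_sub_sq_norm_sub (a z : ℂ) :
    ‖1 - conj a * z‖ ^ 2 - ‖z - a‖ ^ 2 = (1 - ‖a‖ ^ 2) * (1 - ‖z‖ ^ 2) := by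
  simp only [Complex.sq_norm, normSq_apply, sub_re, sub_im, mul_re, mul_im, conj_re, conj_im,
    one_re, one_im]
  ring

lemma one_sub_sq_norm_mobius (ha : ‖a‖ < 1) (hz : ‖z‖ ≤ 1) :
    1 - ‖mobius a z‖ ^ 2 = (1 - ‖a‖ ^ 2) * (1 - ‖z‖ ^ 2) / ‖1 - conj a * z‖ ^ 2 := by
  have hne : ‖1 - conj a * z‖ ≠ 0 := norm_ne_zero_iff.2 (one_sub_conj_mul_ne_zero ha hz)
  rw [← sq_norm_one_sub_conj_mul_sub_sq_norm_sub, mobius, norm_div, sub_div,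
    div_self (pow_ne_zero 2 hne), div_pow]

lemma norm_mobius_lt_one (ha : ‖a‖ < 1) (hz : ‖z‖ < 1) : ‖mobius a z‖ < 1 := by
  have hne : ‖1 - conj a * z‖ ≠ 0 := norm_ne_zero_iff.2 (one_sub_conj_mul_ne_zero ha hz.le)
  have ha' := one_sub_sq_norm_pos ha
  have hz' := one_sub_sq_norm_pos hz
  have : 0 < 1 - ‖mobius a z‖ ^ 2 := by
    rw [one_sub_sq_norm_mobius ha hz.le]
    positivity
  nlinarith [norm_nonneg (mobius a z)]

lemma hasDerivAt_mobius (ha : ‖a‖ < 1) (hz : ‖z‖ ≤ 1) :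
    HasDerivAt (mobius a) ((1 - ‖a‖ ^ 2 : ℝ) / (1 - conj a * z) ^ 2) z := by
  have hden : HasDerivAt (fun z => 1 - conj a * z) (-conj a) z := by
    simpa using ((hasDerivAt_id z).const_mul (conj a)).const_sub 1
  refine (((hasDerivAt_id z).sub_const a).div hden (one_sub_conj_mul_ne_zero ha hz)).congr_deriv ?_
  push_cast
  rw [← conj_mul', id]
  ring

lemma continuousOn_mobius (ha : ‖a‖ < 1) : ContinuousOn (mobius a) (ball 0 1) := fun _ hz =>
  (hasDerivAt_mobius ha (mem_ball_zero_iff.1 hz).le).continuousAt.continuousWithinAt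

lemma log_one_add_div_le_hypDist (hz : ‖z‖ < 1) (hw : ‖w‖ < 1) :
    Real.log (1 + ‖z - w‖ / (1 - ‖z‖)) ≤ hypDist z w := by
  set d := ‖z - w‖
  set η := 1 - ‖z‖
  have hd : 0 ≤ d := norm_nonneg _
  have hη : 0 < η := sub_pos.2 hz
  have hden : ‖1 - conj z * w‖ ≤ 2 * η + d := by
    have hsplit : 1 - conj z * w = ((1 - ‖z‖ ^ 2 : ℝ) : ℂ) + conj z * (z - w) := by
      push_cast
      rw [← conj_mul']
      ring
    calc ‖1 - conj z * w‖ ≤ (1 - ‖z‖ ^ 2) + ‖z‖ * d := by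
          rw [hsplit]
          refine (norm_add_le _ _).trans_eq ?_
          rw [norm_real, Real.norm_of_nonneg (one_sub_sq_norm_pos hz).le, norm_mul, norm_conj]
      _ ≤ 2 * η + d := by nlinarith [norm_nonneg z]
  have hden_pos : 0 < ‖1 - conj z * w‖ := norm_pos_iff.2 (one_sub_conj_mul_ne_zero hz hw.le)
  have hratio : d / (2 * η + d) ≤ d / ‖1 - conj z * w‖ := by gcongr
  have hlt : d / ‖1 - conj z * w‖ < 1 := by
    simpa [mobius, norm_sub_rev, d] using norm_mobius_lt_one hz hw
  have hnonneg : 0 ≤ d / (2 * η + d) := by positivity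
  calc Real.log (1 + d / η) = 2 * Real.artanh (d / (2 * η + d)) := by
        rw [Real.artanh_eq_half_log ⟨by linarith, (hratio.trans_lt hlt).le⟩]
        field_simp
        ring_nf
    _ ≤ hypDist z w :=
        mul_le_mul_of_nonneg_left (Real.artanh_le_artanh (by linarith) hlt hratio) zero_le_two

end Mobius

section Length

/-- The speed of a path in the unit disc, measured in the hyperbolic metric. -/
def hypSpeed (γ : ℝ → ℂ) (t : ℝ) : ℝ := 2 * ‖deriv γ t‖ / (1 - ‖γ t‖ ^ 2)

variable {γ : ℝ → ℂ} {a b t : ℝ} {c : ℂ}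

lemma hypSpeed_nonneg (ht : ‖γ t‖ < 1) : 0 ≤ hypSpeed γ t :=
  div_nonneg (by positivity) (one_sub_sq_norm_pos ht).le

lemma hypSpeed_mobius_comp (hc : ‖c‖ < 1) (hdiff : DifferentiableAt ℝ γ t) (ht : ‖γ t‖ < 1) :
    hypSpeed (mobius c ∘ γ) t = hypSpeed γ t := by
  have hderiv := ((hasDerivAt_mobius hc ht.le).comp_of_eq t hdiff.hasDerivAt rfl).deriv
  have hne : ‖1 - conj c * γ t‖ ≠ 0 := norm_ne_zero_iff.2 (one_sub_conj_mul_ne_zero hc ht.le)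
  have hc' := one_sub_sq_norm_pos hc
  have ht' := one_sub_sq_norm_pos ht
  rw [hypSpeed, hypSpeed, hderiv, Function.comp_apply, one_sub_sq_norm_mobius hc ht.le, norm_mul,
    norm_div, norm_pow, norm_real, Real.norm_of_nonneg hc'.le]
  field_simp

lemma integrableOn_hypSpeed (hab : a < b) (hγ : ContDiffOn ℝ 1 γ (Icc a b))
    (hdisc : ∀ t ∈ Icc a b, ‖γ t‖ < 1) : IntegrableOn (hypSpeed γ) (Icc a b) := by
  have hcont : ContinuousOn
      (fun t => 2 * ‖derivWithin γ (Icc a b) t‖ / (1 - ‖γ t‖ ^ 2)) (Icc a b) :=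
    (continuousOn_const.mul
      (hγ.continuousOn_derivWithin (uniqueDiffOn_Icc hab) le_rfl).norm).div
      (continuousOn_const.sub (hγ.continuousOn.norm.pow 2))
      fun t ht => (one_sub_sq_norm_pos (hdisc t ht)).ne'
  rw [integrableOn_Icc_iff_integrableOn_Ioo]
  refine (hcont.integrableOn_Icc.mono_set Ioo_subset_Icc_self).congr_fun (fun t ht => ?_)
    measurableSet_Ioo
  simp only [hypSpeed, derivWithin_of_mem_nhds (Icc_mem_nhds ht.1 ht.2)]

lemma abs_re_mul_le (hc : ‖c‖ ≤ 1) (z : ℂ) : |(c * z).re| ≤ ‖z‖ :=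
  (abs_re_le_norm _).trans <| (norm_mul c z).trans_le <|
    mul_le_of_le_one_left (norm_nonneg z) hc

/- Linear functionals replace the norm of `γ`, which need not be differentiable at zeros of `γ`. -/
lemma artanh_re_mul_sub_le_integral_hypSpeed (hab : a ≤ b) (hcont : ContinuousOn γ (Icc a b))
    (hdiff : DifferentiableOn ℝ γ (Ioo a b)) (hdisc : ∀ t ∈ Icc a b, ‖γ t‖ < 1)
    (hint : IntegrableOn (hypSpeed γ) (Icc a b)) (hc : ‖c‖ ≤ 1) :
    2 * Real.artanh (c * γ b).re - 2 * Real.artanh (c * γ a).re ≤ ∫ t in a..b, hypSpeed γ t := by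
  have hmem : ∀ t ∈ Icc a b, (c * γ t).re ∈ Ioo (-1 : ℝ) 1 := fun t ht =>
    abs_lt.1 ((abs_re_mul_le hc _).trans_lt (hdisc t ht))
  refine sub_le_integral_of_hasDeriv_right_of_le (g := fun t => 2 * Real.artanh (c * γ t).re)
    (g' := fun t => 2 * (1 / (1 - (c * γ t).re ^ 2) * (c * deriv γ t).re)) hab ?_ ?_ hint ?_
  · have hre : ContinuousOn (fun t => (c * γ t).re) (Icc a b) :=
      continuous_re.comp_continuousOn (continuousOn_const.mul hcont)
    exact continuousOn_const.mul (continuousOn_artanh.comp hre hmem)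
  · intro t ht
    have hγt : HasDerivAt γ (deriv γ t) t :=
      (hdiff.differentiableAt (Ioo_mem_nhds ht.1 ht.2)).hasDerivAt
    have hre : HasDerivAt (fun t => (c * γ t).re) (c * deriv γ t).re t :=
      reCLM.hasFDerivAt.comp_hasDerivAt t (hγt.const_mul c)
    exact (((hasDerivAt_artanh (hmem t (Ioo_subset_Icc_self ht))).comp t hre).const_mul
      2).hasDerivWithinAt
  · intro t ht
    have hsq : (c * γ t).re ^ 2 ≤ ‖γ t‖ ^ 2 := sq_le_sq.2 (by simpa using abs_re_mul_le hc (γ t))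
    have hpos := one_sub_sq_norm_pos (hdisc t (Ioo_subset_Icc_self ht))
    calc 2 * (1 / (1 - (c * γ t).re ^ 2) * (c * deriv γ t).re)
        = 2 * (c * deriv γ t).re / (1 - (c * γ t).re ^ 2) := by ring
      _ ≤ 2 * ‖deriv γ t‖ / (1 - ‖γ t‖ ^ 2) := by
          gcongr
          exact (le_abs_self _).trans (abs_re_mul_le hc _)

theorem hypDist_le_integral_hypSpeed (hab : a ≤ b) (hcont : ContinuousOn γ (Icc a b))
    (hdiff : DifferentiableOn ℝ γ (Ioo a b)) (hdisc : ∀ t ∈ Icc a b, ‖γ t‖ < 1)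
    (hint : IntegrableOn (hypSpeed γ) (Icc a b)) :
    hypDist (γ a) (γ b) ≤ ∫ t in a..b, hypSpeed γ t := by
  have ha : ‖γ a‖ < 1 := hdisc a (left_mem_Icc.2 hab)
  set η : ℝ → ℂ := mobius (γ a) ∘ γ
  have hspeed : EqOn (hypSpeed η) (hypSpeed γ) (Ioo a b) := fun t ht =>
    hypSpeed_mobius_comp ha (hdiff.differentiableAt (Ioo_mem_nhds ht.1 ht.2))
      (hdisc t (Ioo_subset_Icc_self ht))
  have hηcont : ContinuousOn η (Icc a b) :=
    (continuousOn_mobius ha).comp hcont fun t ht => mem_ball_zero_iff.2 (hdisc t ht)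
  have hηdiff : DifferentiableOn ℝ η (Ioo a b) := fun t ht =>
    ((hasDerivAt_mobius ha (hdisc t (Ioo_subset_Icc_self ht)).le).differentiableAt.restrictScalars
      ℝ).comp_differentiableWithinAt t (hdiff t ht)
  have hηint : IntegrableOn (hypSpeed η) (Icc a b) := by
    rw [integrableOn_Icc_iff_integrableOn_Ioo] at hint ⊢
    exact hint.congr_fun hspeed.symm measurableSet_Ioo
  obtain ⟨c, hc, hcb⟩ := exists_norm_eq_mul_self (η b)
  calc hypDist (γ a) (γ b)
      = 2 * Real.artanh (c * η b).re - 2 * Real.artanh (c * η a).re := by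
        rw [← hcb, hypDist_eq_artanh_norm_mobius]
        simp [η]
    _ ≤ ∫ t in a..b, hypSpeed η t :=
        artanh_re_mul_sub_le_integral_hypSpeed hab hηcont hηdiff
          (fun t ht => norm_mobius_lt_one ha (hdisc t ht)) hηint hc.le
    _ = ∫ t in a..b, hypSpeed γ t := by
        simp only [integral_of_le hab, integral_Ioc_eq_integral_Ioo]
        exact setIntegral_congr_fun measurableSet_Ioo hspeed

end Length

section Exp

variable {w w' : ℂ}

lemma norm_exp_lt_one_iff : ‖exp w‖ < 1 ↔ w.re < 0 := by
  rw [norm_exp, Real.exp_lt_one_iff]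

lemma exp_re_mul_abs_sin_le_norm_exp_sub_exp (w w' : ℂ) :
    Real.exp w.re * |Real.sin ((w.im - w'.im) / 2)| ≤ ‖exp w - exp w'‖ := by
  set v : ℂ := ⟨w.re, w'.im⟩
  have hchord : ‖exp w - exp v‖ = Real.exp w.re * (2 * |Real.sin ((w.im - w'.im) / 2)|) := by
    have hfactor : exp w - exp v = exp v * (exp (I * ((w.im - w'.im : ℝ) : ℂ)) - 1) := by
      have hw : w = v + I * ((w.im - w'.im : ℝ) : ℂ) := by apply Complex.ext <;> simp [v]
      rw [mul_sub, ← Complex.exp_add, ← hw, mul_one]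
    rw [hfactor, norm_mul, norm_exp, norm_exp_I_mul_ofReal_sub_one, norm_mul]
    simp [v]
  have hradial : ‖exp w' - exp v‖ ≤ ‖exp w - exp w'‖ := by
    have hray : exp w' - exp v =
        ((Real.exp w'.re - Real.exp w.re : ℝ) : ℂ) * exp (w'.im * I) := by
      rw [exp_eq_exp_re_mul_sin_add_cos w', exp_eq_exp_re_mul_sin_add_cos v, exp_mul_I]
      push_cast
      ring
    rw [hray, norm_mul, norm_exp_ofReal_mul_I, mul_one, norm_real, ← norm_exp, ← norm_exp,
      norm_sub_rev (exp w)]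
    exact abs_norm_sub_norm_le _ _
  have htriangle := norm_sub_le_norm_sub_add_norm_sub (exp w) (exp w') (exp v)
  linarith

lemma exp_re_mul_one_sub_abs_im_div_pi_le (hw : |w.im| ≤ Real.pi) (hw' : w'.im = Real.pi) :
    Real.exp w.re * (1 - |w.im| / Real.pi) ≤ ‖exp w - exp w'‖ := by
  refine le_trans ?_ (exp_re_mul_abs_sin_le_norm_exp_sub_exp w w')
  gcongr
  have hsin : Real.sin ((w.im - w'.im) / 2) = -Real.cos (|w.im| / 2) := by
    rw [hw', sub_div, Real.sin_sub_pi_div_two, ← abs_two, ← abs_div, Real.cos_abs, abs_two]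
  calc 1 - |w.im| / Real.pi = 1 - 2 / Real.pi * (|w.im| / 2) := by ring
    _ ≤ Real.cos (|w.im| / 2) := Real.one_sub_mul_le_cos (by positivity) (by linarith)
    _ ≤ |Real.sin ((w.im - w'.im) / 2)| := by
        rw [hsin, abs_neg]
        exact le_abs_self _

end Exp

section Cone

variable {u : ℝ} {z w : ℂ}

lemma abs_im_le_pi_of_mem_cone (hz : z ∈ Cone u) : |z.im| ≤ Real.pi := by
  have hconv : Convex ℝ {z : ℂ | -Real.pi ≤ z.im ∧ z.im ≤ Real.pi} :=
    (convex_halfSpace_im_ge _).inter (convex_halfSpace_im_le _)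
  refine abs_le.2 (convexHull_min ?_ hconv hz)
  rintro v (rfl | rfl | rfl) <;> simp [Real.pi_nonneg]

lemma neg_re_le_of_mem_cone (hu : 0 ≤ u) (hz : z ∈ Cone u) :
    -z.re ≤ u * (1 - |z.im| / Real.pi) := by
  have hconv : ConvexOn ℝ univ fun z : ℂ => u / Real.pi * |z.im| - z.re :=
    (((convexOn_norm convex_univ).comp_linearMap imLm).smul
      (div_nonneg hu Real.pi_nonneg)).sub (reLm.concaveOn convex_univ)
  obtain ⟨v, hv, hle⟩ := hconv.exists_ge_of_mem_convexHull (subset_univ _) hz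
  have hvertex : u / Real.pi * |v.im| - v.re = u := by
    rcases hv with rfl | rfl | rfl <;> simp [abs_of_pos Real.pi_pos, Real.pi_ne_zero]
  rw [hvertex] at hle
  linear_combination hle

lemma neg_log_le_hypDist_exp_of_mem_cone (hu : 0 < u) (hz : z ∈ Cone u) (hz_re : z.re < 0)
    (hw_re : w.re < 0) (hw_im : w.im = Real.pi) : -Real.log u ≤ hypDist (exp z) (exp w) := by
  set d := ‖exp z - exp w‖
  set θ := 1 - |z.im| / Real.pi
  have hθ : θ ≤ 1 := sub_le_self _ (by positivity)
  have hη : 0 < 1 - Real.exp z.re := sub_pos.2 (Real.exp_lt_one_iff.2 hz_re)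
  have hη_le : 1 - Real.exp z.re ≤ u * θ := by
    linarith [Real.add_one_le_exp z.re, neg_re_le_of_mem_cone hu.le hz]
  have hd : Real.exp z.re * θ ≤ d :=
    exp_re_mul_one_sub_abs_im_div_pi_le (abs_im_le_pi_of_mem_cone hz) hw_im
  have hratio : u⁻¹ ≤ 1 + d / (1 - Real.exp z.re) := by
    rw [inv_le_iff_one_le_mul₀ hu, one_add_div hη.ne', div_mul_eq_mul_div, one_le_div hη]
    calc 1 - Real.exp z.re ≤ u * θ := hη_le
      _ ≤ u * (θ + (1 - Real.exp z.re) * (1 - θ)) := by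
          gcongr
          exact le_add_of_nonneg_right (mul_nonneg hη.le (sub_nonneg.2 hθ))
      _ = (1 - Real.exp z.re + Real.exp z.re * θ) * u := by ring
      _ ≤ (1 - Real.exp z.re + d) * u := by gcongr
  calc -Real.log u = Real.log u⁻¹ := (Real.log_inv u).symm
    _ ≤ Real.log (1 + d / (1 - Real.exp z.re)) := Real.log_le_log (inv_pos.2 hu) hratio
    _ ≤ hypDist (exp z) (exp w) := by
        simpa only [norm_exp] using log_one_add_div_le_hypDist (norm_exp_lt_one_iff.2 hz_re)
          (norm_exp_lt_one_iff.2 hw_re)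

end Cone

theorem stmt11_general {u : ℝ} (hu : 0 < u) {γ w : ℝ → ℂ}
    (hdiff : DifferentiableOn ℝ γ (Ioo 0 1)) (hint : IntegrableOn (hypSpeed γ) (Icc 0 1))
    (hdisc : ∀ t ∈ Icc (0 : ℝ) 1, ‖γ t‖ < 1) (hw : ContinuousOn w (Icc 0 1))
    (hexp : ∀ t ∈ Icc (0 : ℝ) 1, exp (w t) = γ t) (h0 : w 0 ∈ Cone u)
    (h1 : Real.pi ≤ (w 1).im) : -Real.log u ≤ hypLength γ := by
  have hre : ∀ t ∈ Icc (0 : ℝ) 1, (w t).re < 0 := fun t ht =>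
    norm_exp_lt_one_iff.1 (hexp t ht ▸ hdisc t ht)
  have hcont : ContinuousOn γ (Icc 0 1) := hw.cexp.congr fun t ht => (hexp t ht).symm
  have h0mem : (0 : ℝ) ∈ Icc (0 : ℝ) 1 := left_mem_Icc.2 zero_le_one
  obtain ⟨T, hT, hT_im⟩ : ∃ T ∈ Icc (0 : ℝ) 1, (w T).im = Real.pi :=
    intermediate_value_Icc zero_le_one (continuous_im.comp_continuousOn hw)
      ⟨(abs_le.1 (abs_im_le_pi_of_mem_cone h0)).2, h1⟩
  have hsub : Icc 0 T ⊆ Icc (0 : ℝ) 1 := Icc_subset_Icc_right hT.2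
  calc -Real.log u ≤ hypDist (γ 0) (γ T) := by
        rw [← hexp 0 h0mem, ← hexp T hT]
        exact neg_log_le_hypDist_exp_of_mem_cone hu h0 (hre 0 h0mem) (hre T hT) hT_im
    _ ≤ ∫ t in (0 : ℝ)..T, hypSpeed γ t :=
        hypDist_le_integral_hypSpeed hT.1 (hcont.mono hsub)
          (hdiff.mono (Ioo_subset_Ioo_right hT.2)) (fun t ht => hdisc t (hsub ht))
          (hint.mono_set hsub)
    _ ≤ hypLength γ := by
        refine integral_mono_interval le_rfl hT.1 hT.2 ?_ ?_
        · filter_upwards [ae_restrict_mem measurableSet_Ioc] with t ht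
          exact hypSpeed_nonneg (hdisc t (Ioc_subset_Icc_self ht))
        · exact (intervalIntegrable_iff_integrableOn_Icc_of_le zero_le_one).2 hint

/-- For every `M > 0` there is `u₀ > 0` such that for all `u ∈ (0, u₀)`:
every `C¹` path `γ : [0,1] → 𝔻 \ {0}` admitting a continuous lift `w` through
`exp` with `w 0 ∈ C(u)` and `w 1 ∈ C(u) + 2πi` has hyperbolic length `≥ M`.
In other words, the infimum `l(u)` of such lengths tends to `+∞` as `u → 0`. -/
theorem stmt11 : ∀ M > (0 : ℝ), ∃ u₀ > (0 : ℝ), ∀ u : ℝ, 0 < u → u < u₀ →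
    ∀ γ w : ℝ → ℂ,
      ContDiffOn ℝ 1 γ (Set.Icc 0 1) →
      (∀ t ∈ Set.Icc (0:ℝ) 1, γ t ∈ Metric.ball (0 : ℂ) 1 \ {0}) →
      ContinuousOn w (Set.Icc 0 1) →
      (∀ t ∈ Set.Icc (0:ℝ) 1, Complex.exp (w t) = γ t) →
      w 0 ∈ Cone u →
      w 1 ∈ (fun z : ℂ => z + 2 * Real.pi * Complex.I) '' Cone u →
      M ≤ hypLength γ := by
  refine fun M _ => ⟨Real.exp (-M), Real.exp_pos _, ?_⟩
  rintro u hu hu₀ γ w hγ hmem hw hexp h0 ⟨z, hz, hz1⟩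
  have hdisc : ∀ t ∈ Icc (0 : ℝ) 1, ‖γ t‖ < 1 := fun t ht => mem_ball_zero_iff.1 (hmem t ht).1
  have h1 : Real.pi ≤ (w 1).im := by
    have him : (w 1).im = z.im + 2 * Real.pi := by simp [← hz1]
    linarith [(abs_le.1 (abs_im_le_pi_of_mem_cone hz)).1]
  calc M ≤ -Real.log u := le_neg_of_le_neg ((Real.log_lt_iff_lt_exp hu).2 hu₀).le
    _ ≤ hypLength γ :=
      stmt11_general hu ((hγ.differentiableOn one_ne_zero).mono Ioo_subset_Icc_self)
        (integrableOn_hypSpeed zero_lt_one hγ hdisc) hdisc hw hexp h0 h1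
end
end

section
/- The function u ↦ ln(sinh(u)/u)/u is strictly increasing on (0, +∞). -/
/-!
Extended by `0` at `u = 0`, the function `f u = log (sinh u / u)` is continuous on `[0, ∞)`, and
`log (sinh u / u) / u` is the slope of its chord from `0` to `u`. These slopes increase strictly
because `f` is strictly convex: its derivative `coth u - 1 / u` has in turn the derivative
`1 / u ^ 2 - 1 / sinh u ^ 2`, which is positive since `sinh u > u` for `u > 0`.
-/

open Real Set

/-- The hyperbolic analogue of `Real.sinc`: `sinh u / u`, extended by `1` at `u = 0`. It gives
`log (sinh u / u)` a continuous extension to `0`. Encoding it as a `dslope` makes the value and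
the continuity at `0` instances of the differentiability of `sinh`. -/
noncomputable def sinhc : ℝ → ℝ := dslope sinh 0

theorem sinhc_zero : sinhc 0 = 1 := by
  simp [sinhc]

theorem sinhc_of_ne_zero {u : ℝ} (hu : u ≠ 0) : sinhc u = sinh u / u := by
  simp [sinhc, dslope_of_ne _ hu, slope_def_field]

theorem sinhc_pos (u : ℝ) : 0 < sinhc u := by
  rcases lt_trichotomy u 0 with hu | rfl | hu
  · rw [sinhc_of_ne_zero hu.ne]
    exact div_pos_of_neg_of_neg (sinh_neg_iff.2 hu) hu
  · rw [sinhc_zero]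
    exact one_pos
  · rw [sinhc_of_ne_zero hu.ne']
    exact div_pos (sinh_pos_iff.2 hu) hu

theorem continuous_sinhc : Continuous sinhc := by
  rw [← continuousOn_univ, sinhc, continuousOn_dslope Filter.univ_mem]
  exact ⟨continuous_sinh.continuousOn, differentiable_sinh 0⟩

theorem continuous_log_sinhc : Continuous fun u => log (sinhc u) :=
  continuous_sinhc.log fun u => (sinhc_pos u).ne'

theorem hasDerivAt_log_sinhc {u : ℝ} (hu : u ≠ 0) :
    HasDerivAt (fun u => log (sinhc u)) (cosh u / sinh u - u⁻¹) u := by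
  have h_deriv : HasDerivAt (fun u => log (sinh u) - log u) (cosh u / sinh u - u⁻¹) u :=
    ((hasDerivAt_sinh u).log (sinh_ne_zero.2 hu)).sub (hasDerivAt_log hu)
  refine h_deriv.congr_of_eventuallyEq ?_
  filter_upwards [isOpen_ne.mem_nhds hu] with x hx
  rw [sinhc_of_ne_zero hx, log_div (sinh_ne_zero.2 hx) hx]

theorem hasDerivAt_coth_sub_inv {u : ℝ} (hu : u ≠ 0) :
    HasDerivAt (fun u => cosh u / sinh u - u⁻¹) ((u ^ 2)⁻¹ - (sinh u ^ 2)⁻¹) u := by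
  have h_sinh : sinh u ≠ 0 := sinh_ne_zero.2 hu
  refine (((hasDerivAt_cosh u).div (hasDerivAt_sinh u) h_sinh).sub
    (hasDerivAt_inv hu)).congr_deriv ?_
  field_simp
  linear_combination -u ^ 2 * cosh_sq u

theorem strictMonoOn_coth_sub_inv : StrictMonoOn (fun u => cosh u / sinh u - u⁻¹) (Ioi 0) := by
  refine strictMonoOn_of_deriv_pos (convex_Ioi 0)
    (fun u hu => (hasDerivAt_coth_sub_inv (ne_of_gt hu)).continuousAt.continuousWithinAt) ?_
  rw [interior_Ioi]
  intro u (hu : 0 < u)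
  have h_lt : u < sinh u := self_lt_sinh_iff.2 hu
  rw [(hasDerivAt_coth_sub_inv hu.ne').deriv, sub_pos]
  gcongr

theorem strictConvexOn_log_sinhc : StrictConvexOn ℝ (Ici 0) fun u => log (sinhc u) := by
  refine StrictMonoOn.strictConvexOn_of_deriv (convex_Ici 0) continuous_log_sinhc.continuousOn ?_
  rw [interior_Ici]
  exact strictMonoOn_coth_sub_inv.congr fun u hu =>
    (hasDerivAt_log_sinhc (ne_of_gt hu)).deriv.symm

/-- The function `u ↦ ln(sinh u / u) / u` is strictly increasing on `(0, ∞)`. -/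
theorem stmt15 :
    StrictMonoOn (fun u : ℝ => Real.log (Real.sinh u / u) / u) (Set.Ioi 0) := by
  intro x (hx : 0 < x) y (hy : 0 < y) hxy
  have h_slope : (log (sinhc x) - log (sinhc 0)) / (x - 0) <
      (log (sinhc y) - log (sinhc 0)) / (y - 0) :=
    strictConvexOn_log_sinhc.secant_strict_mono self_mem_Ici hx.le hy.le hx.ne' hy.ne' hxy
  simpa only [sinhc_zero, log_one, sub_zero, sinhc_of_ne_zero hx.ne', sinhc_of_ne_zero hy.ne']
    using h_slope
end

section
/- Define a : (0,∞) → ℝ by a(u) = u²/(2π) for u ∈ (0, π] and a(u) = u − π/2 for u ≥ π. Then for every u > 0, the quotient ln(sinh(u)/u)/a(u) lies in the interval [0.75, 1.05]. (Here u/sinh(u) is the conformal radius of 𝔻 \ {e^{−u}} at 0 and a(u) = (1/2π)·area of T(−u) in the quotient ℂ/2πiℤ.) -/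
/-!
Every factor of Euler's product `sinh u / u = ∏ (1 + u² / (k² π²))` satisfies
`1 + p s ≤ (1 + s) ^ p` for `p ≥ 1` (Bernoulli), so `log (sinh u / u) / u²` decreases on `(0, ∞)`.
On `(0, π]` it is therefore at least its value at `π`, where both formulas for `a` agree, and the
lower bound there is the one on `[π, ∞)`. From above, `1 + s ≤ exp s` and `∑ 1 / k² = π² / 6` give
`log (sinh u / u) ≤ u² / 6`, and `π / 3 < 1.05`. On `[π, ∞)`, `log (sinh u)` is
`u - log 2` up to a small error.
-/

open Filter Finset Real Topology

theorem tendsto_euler_sinh_prod {u : ℝ} (hu : u ≠ 0) :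
    Tendsto (fun n : ℕ ↦ ∏ j ∈ range n, (1 + u ^ 2 / (π ^ 2 * (j + 1) ^ 2))) atTop
      (𝓝 (sinh u / u)) := by
  have hu' : (u : ℂ) ≠ 0 := mod_cast hu
  have hπ : (π : ℂ) ≠ 0 := mod_cast pi_ne_zero
  have h := (Complex.tendsto_euler_sin_prod (u * Complex.I / π)).div_const (u * Complex.I)
  rw [mul_div_cancel₀ _ hπ, Complex.sin_mul_I, mul_div_mul_right _ _ Complex.I_ne_zero] at h
  rw [← tendsto_ofReal_iff]
  push_cast
  refine h.congr fun n ↦ ?_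
  rw [mul_div_cancel_left₀ _ (mul_ne_zero hu' Complex.I_ne_zero)]
  refine prod_congr rfl fun j _ ↦ ?_
  rw [div_pow, mul_pow, Complex.I_sq, ← div_div]
  ring

theorem sinh_div_self_le_rpow {u v : ℝ} (hu : 0 < u) (huv : u ≤ v) :
    sinh v / v ≤ (sinh u / u) ^ (v ^ 2 / u ^ 2) := by
  have hv : 0 < v := hu.trans_le huv
  have hp : 1 ≤ v ^ 2 / u ^ 2 := by rw [one_le_div₀ (by positivity)]; gcongr
  refine le_of_tendsto_of_tendsto' (tendsto_euler_sinh_prod hv.ne')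
    ((tendsto_euler_sinh_prod hu.ne').rpow_const (.inr (by positivity))) fun n ↦ ?_
  rw [← finsetProd_rpow _ _ fun j _ ↦ by positivity]
  gcongr with j
  calc 1 + v ^ 2 / (π ^ 2 * (j + 1) ^ 2)
      = 1 + v ^ 2 / u ^ 2 * (u ^ 2 / (π ^ 2 * (j + 1) ^ 2)) := by field_simp
    _ ≤ (1 + u ^ 2 / (π ^ 2 * (j + 1) ^ 2)) ^ (v ^ 2 / u ^ 2) :=
        one_add_mul_self_le_rpow_one_add (neg_one_lt_zero.le.trans (by positivity)) hp

theorem sum_one_div_succ_sq_le (n : ℕ) : ∑ j ∈ range n, 1 / ((j : ℝ) + 1) ^ 2 ≤ π ^ 2 / 6 := by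
  have h : ∑ j ∈ range (n + 1), 1 / (j : ℝ) ^ 2 ≤ π ^ 2 / 6 :=
    sum_le_hasSum _ (fun _ _ ↦ by positivity) hasSum_zeta_two
  simpa [sum_range_succ'] using h

theorem sinh_div_self_le_exp {u : ℝ} (hu : u ≠ 0) : sinh u / u ≤ exp (u ^ 2 / 6) := by
  refine le_of_tendsto' (tendsto_euler_sinh_prod hu) fun n ↦ ?_
  calc ∏ j ∈ range n, (1 + u ^ 2 / (π ^ 2 * (j + 1) ^ 2))
      ≤ exp (∑ j ∈ range n, u ^ 2 / (π ^ 2 * (j + 1) ^ 2)) :=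
        prod_one_add_le_exp_sum _ fun j ↦ by positivity
    _ = exp (u ^ 2 / π ^ 2 * ∑ j ∈ range n, 1 / ((j : ℝ) + 1) ^ 2) := by
        simp only [mul_sum, div_mul_div_comm, mul_one]
    _ ≤ exp (u ^ 2 / π ^ 2 * (π ^ 2 / 6)) := by gcongr; exact sum_one_div_succ_sq_le n
    _ = exp (u ^ 2 / 6) := by field_simp

theorem sinh_div_self_pos {u : ℝ} (hu : u ≠ 0) : 0 < sinh u / u := by
  rcases hu.lt_or_gt with hneg | hpos
  · exact div_pos_of_neg_of_neg (sinh_neg_iff.2 hneg) hneg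
  · exact div_pos (sinh_pos_iff.2 hpos) hpos

theorem log_sinh_div_self_le {u : ℝ} (hu : u ≠ 0) : log (sinh u / u) ≤ u ^ 2 / 6 :=
  (log_le_iff_le_exp (sinh_div_self_pos hu)).2 (sinh_div_self_le_exp hu)

theorem antitoneOn_log_sinh_div_self_div_sq :
    AntitoneOn (fun u : ℝ ↦ log (sinh u / u) / u ^ 2) (Set.Ioi 0) := by
  intro u (hu : 0 < u) v (hv : 0 < v) huv
  have h := log_le_log (sinh_div_self_pos hv.ne') (sinh_div_self_le_rpow hu huv)
  rw [log_rpow (sinh_div_self_pos hu.ne')] at h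
  refine (div_le_iff₀ (by positivity)).2 (h.trans_eq ?_)
  ring

theorem log_sinh_le {u : ℝ} (hu : 0 < u) : log (sinh u) ≤ u - log 2 :=
  calc log (sinh u)
      ≤ log (exp u / 2) := log_le_log (sinh_pos_iff.2 hu) (by
        rw [sinh_eq]; linarith [exp_pos (-u)])
    _ = u - log 2 := by rw [log_div (exp_pos u).ne' two_ne_zero, log_exp]

theorem log_sinh_eq {u : ℝ} (hu : 0 < u) :
    log (sinh u) = u - log 2 + log (1 - exp (-(2 * u))) := by
  have hfactor : sinh u = exp u / 2 * (1 - exp (-(2 * u))) := by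
    rw [sinh_eq, show -u = u + -(2 * u) by ring, exp_add]
    ring
  have hpos : 0 < 1 - exp (-(2 * u)) := by simpa using hu
  rw [hfactor, log_mul (by positivity) hpos.ne', log_div (exp_pos u).ne' two_ne_zero, log_exp]

theorem le_log_sinh {u : ℝ} (hu : 0 < u) :
    u - log 2 - (exp (2 * u) - 1)⁻¹ ≤ log (sinh u) := by
  have hpos : 0 < 1 - exp (-(2 * u)) := by simpa using hu
  have hpos' : 0 < exp (2 * u) - 1 := by simpa using hu
  have hinv : 1 - (1 - exp (-(2 * u)))⁻¹ = -(exp (2 * u) - 1)⁻¹ := by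
    rw [exp_neg]
    field_simp
    ring
  linarith [log_sinh_eq hu, one_sub_inv_le_log_of_pos hpos]

theorem log_le_log_add_div_sub_one {x c : ℝ} (hx : 0 < x) (hc : 0 < c) :
    log x ≤ log c + (x / c - 1) := by
  have h := log_le_sub_one_of_pos (div_pos hx hc)
  rw [log_div hx.ne' hc.ne'] at h
  linarith

theorem log_sinh_div_self_le_of_pi_le {u : ℝ} (hu : π ≤ u) :
    log (sinh u / u) ≤ 1.05 * (u - π / 2) := by
  have hu₀ : 0 < u := pi_pos.trans_le hu
  have hlog : 1 ≤ log u :=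
    (le_log_iff_exp_le hu₀).2 (by linarith [exp_one_lt_three, pi_gt_three])
  rw [log_div (sinh_pos_iff.2 hu₀).ne' hu₀.ne']
  linarith [log_sinh_le hu₀, log_two_gt_d9, pi_lt_d2]

theorem le_log_sinh_div_self_of_pi_le {u : ℝ} (hu : π ≤ u) :
    0.75 * (u - π / 2) ≤ log (sinh u / u) := by
  have hu₀ : 0 < u := pi_pos.trans_le hu
  have hexp : 25 ≤ exp (2 * u) := by
    nlinarith [quadratic_le_exp_of_nonneg (x := 2 * u) (by positivity), pi_gt_three]
  have herr : (exp (2 * u) - 1)⁻¹ ≤ 24⁻¹ := by gcongr; linarith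
  have hlog : log u ≤ 2 * log 2 + (u / 4 - 1) := by
    have hlog_four : log 4 = 2 * log 2 := by
      rw [show (4 : ℝ) = 2 ^ 2 by norm_num, log_pow, Nat.cast_ofNat]
    exact hlog_four ▸ log_le_log_add_div_sub_one hu₀ four_pos
  rw [log_div (sinh_pos_iff.2 hu₀).ne' hu₀.ne']
  linarith [le_log_sinh hu₀, log_two_lt_d9, pi_gt_d2]

theorem log_sinh_div_self_le_mul_sq_div_two_pi {u : ℝ} (hu : u ≠ 0) :
    log (sinh u / u) ≤ 1.05 * (u ^ 2 / (2 * π)) := by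
  refine (log_sinh_div_self_le hu).trans ?_
  rw [mul_div_assoc', div_le_div_iff₀ (by norm_num) (by positivity)]
  nlinarith [pi_lt_d2, sq_nonneg u]

theorem le_log_sinh_div_self_of_le_pi {u : ℝ} (hu : 0 < u) (huπ : u ≤ π) :
    0.75 * (u ^ 2 / (2 * π)) ≤ log (sinh u / u) := by
  have hanti := antitoneOn_log_sinh_div_self_div_sq hu pi_pos huπ
  calc 0.75 * (u ^ 2 / (2 * π))
      = 0.75 * (π - π / 2) / π ^ 2 * u ^ 2 := by field_simp; ring
    _ ≤ log (sinh π / π) / π ^ 2 * u ^ 2 := by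
        gcongr; exact le_log_sinh_div_self_of_pi_le le_rfl
    _ ≤ log (sinh u / u) := (le_div_iff₀ (by positivity)).1 hanti

/-- With `a(u) = u²/(2π)` for `u ∈ (0, π]` and `a(u) = u - π/2` for `u ≥ π`,
the quotient `ln(sinh u / u) / a(u)` lies in `[0.75, 1.05]` for every `u > 0`. -/
theorem stmt16 (u : ℝ) (hu : 0 < u) :
    Real.log (Real.sinh u / u) /
      (if u ≤ Real.pi then u ^ 2 / (2 * Real.pi) else u - Real.pi / 2)
      ∈ Set.Icc (0.75 : ℝ) 1.05 := by
  split_ifs with h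
  · have ha : 0 < u ^ 2 / (2 * π) := by positivity
    exact ⟨(le_div_iff₀ ha).2 (le_log_sinh_div_self_of_le_pi hu h),
      (div_le_iff₀ ha).2 (log_sinh_div_self_le_mul_sq_div_two_pi hu.ne')⟩
  · have hπ : π ≤ u := (not_le.1 h).le
    have ha : 0 < u - π / 2 := by linarith [pi_pos]
    exact ⟨(le_div_iff₀ ha).2 (le_log_sinh_div_self_of_pi_le hπ),
      (div_le_iff₀ ha).2 (log_sinh_div_self_le_of_pi_le hπ)⟩
end
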